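/- Let A and B be the companion matrices of f(x) = (x-1)^6 and g(x) = (x+1)^4(x^2+1) respectively, regarded as elements of GL(6,ℤ). Then the elements t = A⁻¹B and r = A⁻¹BA both have infinite order, the subgroup of GL(6,ℤ) generated by A and B equals the subgroup generated by t and r, and this group is the internal free product of the cyclic subgroups ⟨t⟩ and ⟨r⟩; in particular, the hypergeometric group Γ(α,β) with α = (0,0,0,0,0,0) and β = (1/2,1/2,1/2,1/2,1/4,3/4) is isomorphic to ℤ * ℤ, a free group of rank 2. -/

import Mathlib

open Matrix

/-- The companion matrix of `f(x) = (x-1)^6 = x^6 - 6x^5 + 15x^4 - 20x^3 + 15x^2 - 6x + 1`. -/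
def companionF : Matrix (Fin 6) (Fin 6) ℤ :=
  !![0,0,0,0,0,-1; 1,0,0,0,0,6; 0,1,0,0,0,-15; 0,0,1,0,0,20; 0,0,0,1,0,-15; 0,0,0,0,1,6]

/-- The companion matrix of `g(x) = (x+1)^4(x^2+1) = x^6 + 4x^5 + 7x^4 + 8x^3 + 7x^2 + 4x + 1`. -/
def companionG : Matrix (Fin 6) (Fin 6) ℤ :=
  !![0,0,0,0,0,-1; 1,0,0,0,0,-4; 0,1,0,0,0,-7; 0,0,1,0,0,-8; 0,0,0,1,0,-7; 0,0,0,0,1,-4]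

/-! Ping-pong with a simplicial cone `C` in `ℤ⁶`. Write `A⁻¹ * B = t = 1 + W` with `W ^ 2 = 0` and
`A⁻¹ * B * A = r = -S`; then `N = S ^ 4 - 1` is nilpotent, and an involution `E` conjugates `t` and
`r` to their inverses. The cone is chosen so that `N ^ j * S ^ i * (W ± 1)` maps both `C` and `E C`
into `C` for `0 ≤ j ≤ 3` and `1 ≤ i ≤ 4`. Up to sign and a positive factor, `r ^ k * t ^ n` with
`k > 0` and `n ≠ 0` is a nonnegative combination of these finitely many matrices, because
`S ^ (4 * m + i) = (1 + N) ^ m * S ^ i` and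
`2 * (1 + n * W) = (n + 1) * (W + 1) + (n - 1) * (W - 1)`. So it maps `X = ±(C ∪ E C)` into itself,
and conjugation by `E` extends this to `k < 0`. Two linear forms positive on `C` and `E C` span a
plane preserved by `t`, and for `n ≠ 0` the power `t ^ n` makes their product negative on `X`; hence
`t ^ n X` is disjoint from `X`, and `X` plays ping-pong with the union of the `t ^ n X`. -/

open scoped Pointwise Function

section Ring

variable {A : Type*} [Ring A]

theorem one_add_pow_mul_mem {K : AddSubmonoid A} {a x : A} (h : ∀ j, a ^ j * x ∈ K) (m : ℕ) :
    (1 + a) ^ m * x ∈ K := by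
  induction m generalizing x with
  | zero => simpa using h 0
  | succ m ih =>
    rw [pow_succ, mul_assoc, add_mul, one_mul]
    refine ih fun j => ?_
    rw [mul_add, ← mul_assoc, ← pow_succ]
    exact add_mem (h j) (h (j + 1))

theorem two_nsmul_mul_one_add_zsmul_mem_or_neg_mem {K : AddSubmonoid A} {s w : A}
    (hadd : s * (1 + w) ∈ K) (hsub : s * (w - 1) ∈ K) {n : ℤ} (hn : n ≠ 0) :
    2 • (s * (1 + n • w)) ∈ K ∨ 2 • -(s * (1 + n • w)) ∈ K := by
  have hcomb (a b : ℕ) : a • (s * (1 + w)) + b • (s * (w - 1)) ∈ K :=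
    add_mem (nsmul_mem hadd a) (nsmul_mem hsub b)
  obtain ⟨m, rfl | rfl⟩ := n.eq_nat_or_neg <;>
    obtain ⟨m, rfl⟩ := Nat.exists_eq_succ_of_ne_zero (by simpa using hn)
  · have hpos : 2 • (s * (1 + ((m + 1 : ℕ) : ℤ) • w)) =
        (m + 2) • (s * (1 + w)) + m • (s * (w - 1)) := by
      simp only [← natCast_zsmul, mul_add, mul_sub, mul_smul_comm]
      push_cast
      module
    exact Or.inl (hpos ▸ hcomb (m + 2) m)
  · have hneg : 2 • -(s * (1 + (-((m + 1 : ℕ) : ℤ)) • w)) =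
        m • (s * (1 + w)) + (m + 2) • (s * (w - 1)) := by
      simp only [← natCast_zsmul, mul_add, mul_sub, mul_smul_comm]
      push_cast
      module
    exact Or.inr (hneg ▸ hcomb m (m + 2))

theorem coe_zpow_eq_one_add_zsmul {u : Aˣ} {w : A} (hw : w * w = 0) (hu : (u : A) = 1 + w)
    (n : ℤ) : ((u ^ n : Aˣ) : A) = 1 + n • w := by
  have hinv : ((u⁻¹ : Aˣ) : A) = 1 - w := by
    rw [Units.inv_eq_of_mul_eq_one_right]
    rw [hu, add_mul, one_mul, mul_sub, mul_one, hw, sub_zero, sub_add_cancel]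
  induction n with
  | zero => simp
  | succ n ih =>
    rw [_root_.zpow_add_one, Units.val_mul, ih, hu, mul_add, mul_one, add_mul, one_mul,
      smul_mul_assoc, hw]
    module
  | pred n ih =>
    rw [_root_.zpow_sub_one, Units.val_mul, ih, hinv, mul_sub, mul_one, add_mul, one_mul,
      smul_mul_assoc, hw]
    module

end Ring

section Cone

variable {R m n o : Type*} [Fintype n]

/-- The interior of the polyhedral cone whose facet normals are the rows of `P`. -/
def coneInterior [NonUnitalNonAssocSemiring R] [Preorder R] (P : Matrix m n R) : Set (n → R) :=
  {x | ∀ i, 0 < (P *ᵥ x) i}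

section OrderedSemiring

variable [Semiring R] [PartialOrder R] [IsStrictOrderedRing R]

/-- The matrices carrying the cone spanned by the columns of `Q` into the cone whose facet normals
are the rows of `P`. -/
def nonnegMaps (P : Matrix m n R) (Q : Matrix n o R) : AddSubmonoid (Matrix n n R) where
  carrier := {M | ∀ i j, 0 ≤ (P * M * Q) i j}
  zero_mem' := by simp
  add_mem' {M N} hM hN i j := by
    rw [Matrix.mul_add, Matrix.add_mul]
    exact add_nonneg (hM i j) (hN i j)

theorem dotProduct_pos {u x : n → R} (hu : 0 < u) (hx : ∀ i, 0 < x i) : 0 < u ⬝ᵥ x := by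
  obtain ⟨hu₀, i, hi⟩ := Pi.lt_def.mp hu
  exact Finset.sum_pos' (fun j _ => mul_nonneg (hu₀ j) (hx j).le)
    ⟨i, Finset.mem_univ i, mul_pos hi (hx i)⟩

end OrderedSemiring

section LinearOrderedSemiring

variable [Semiring R] [LinearOrder R] [IsStrictOrderedRing R]

theorem mem_nonnegMaps_of_nsmul_mem {P : Matrix m n R} {Q : Matrix n o R} {M : Matrix n n R}
    {k : ℕ} (hk : k ≠ 0) (hM : k • M ∈ nonnegMaps P Q) : M ∈ nonnegMaps P Q := fun i j => by
  have h : 0 ≤ (P * (k • M) * Q) i j := hM i j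
  rw [Matrix.mul_smul, Matrix.smul_mul, Matrix.smul_apply] at h
  exact (nsmul_nonneg_iff hk).mp h

end LinearOrderedSemiring

variable [CommRing R] [LinearOrder R] [IsStrictOrderedRing R]
  [Fintype m] [DecidableEq n] {P : Matrix m n R} {Q : Matrix n m R} {d : R}

theorem dotProduct_pos_of_mem_coneInterior (hd : 0 < d) (hQP : Q * P = d • (1 : Matrix n n R))
    {u x : n → R} (hu₀ : u ≠ 0) (hu : 0 ≤ u ᵥ* Q) (hx : x ∈ coneInterior P) : 0 < u ⬝ᵥ x := by
  have hscale (v : n → R) : v ᵥ* Q ᵥ* P = d • v := by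
    rw [vecMul_vecMul, hQP, vecMul_smul, vecMul_one]
  have huQ : u ᵥ* Q ≠ 0 := fun h => hu₀ <| by
    simpa [h, hd.ne', eq_comm] using hscale u
  have hpos : 0 < u ᵥ* Q ⬝ᵥ P *ᵥ x := dotProduct_pos (hu.lt_of_ne' huQ) hx
  rw [dotProduct_mulVec, hscale, smul_dotProduct, smul_eq_mul] at hpos
  exact pos_of_mul_pos_right hpos hd.le

theorem mulVec_mem_coneInterior (hd : 0 < d) (hQP : Q * P = d • (1 : Matrix n n R))
    (hP : ∀ i, P.row i ≠ 0) {M : Matrix n n R} (hM : M ∈ nonnegMaps P Q) (hunit : IsUnit M)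
    {x : n → R} (hx : x ∈ coneInterior P) : M *ᵥ x ∈ coneInterior P := fun i => by
  have hPM : P.row i ᵥ* M ≠ 0 := fun h =>
    hP i (vecMul_injective_of_isUnit hunit (h.trans (zero_vecMul M).symm))
  change 0 < P.row i ⬝ᵥ M *ᵥ x
  rw [dotProduct_mulVec]
  exact dotProduct_pos_of_mem_coneInterior hd hQP hPM (fun j => hM i j) hx

end Cone

theorem freeGroup_lift_injective_of_zpow_ping_pong {G α ι : Type*} [Group G] [MulAction G α]
    [Nontrivial ι] (a : ι → G) (X : ι → Set α) (hX : ∀ i, (X i).Nonempty)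
    (hdisj : Pairwise (Disjoint on X))
    (hmaps : Pairwise fun i j => ∀ n : ℤ, n ≠ 0 → a i ^ n • X j ⊆ X i) :
    Function.Injective (FreeGroup.lift a) := by
  have hlift : FreeGroup.lift a =
      (Monoid.CoprodI.lift fun i => FreeGroup.lift fun _ : Unit => a i).comp
        (freeGroupEquivCoprodI (ι := ι)).toMonoidHom := by
    ext i
    simp
  rw [hlift, MonoidHom.coe_comp]
  refine Function.Injective.comp ?_ (MulEquiv.injective freeGroupEquivCoprodI)
  refine Monoid.CoprodI.lift_injective_of_ping_pong _ ?_ X hX hdisj fun i j hij => ?_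
  · have hcard : 3 ≤ Cardinal.mk (FreeGroup Unit) := by
      rw [Cardinal.mk_congr FreeGroup.freeGroupUnitEquivInt, Cardinal.mk_denumerable]
      exact (Cardinal.natCast_lt_aleph0 (n := 3)).le
    exact Or.inr ⟨Classical.arbitrary ι, hcard⟩
  · refine FreeGroup.freeGroupUnitEquivInt.forall_congr_left.mpr fun n hn => ?_
    change FreeGroup.of () ^ n ≠ 1 at hn
    change FreeGroup.lift _ (FreeGroup.of () ^ n) • X j ⊆ X i
    rw [map_zpow, FreeGroup.lift_apply_of]
    exact hmaps hij n fun h => hn (by rw [h, zpow_zero])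

theorem freeGroup_lift_pair_injective_of_zpow_smul_subset {G α : Type*} [Group G] [MulAction G α]
    {t r : G} {X : Set α} (hX : X.Nonempty) (hdisj : ∀ n : ℤ, n ≠ 0 → Disjoint (t ^ n • X) X)
    (hmaps : ∀ k n : ℤ, k ≠ 0 → n ≠ 0 → r ^ k • t ^ n • X ⊆ X) :
    Function.Injective (FreeGroup.lift ![t, r]) := by
  let Y : Set α := ⋃ n ∈ ({0}ᶜ : Set ℤ), t ^ n • X
  have htX (n : ℤ) (hn : n ≠ 0) : t ^ n • X ⊆ Y :=
    Set.subset_biUnion_of_mem (u := fun n : ℤ => t ^ n • X) (Set.mem_compl_singleton_iff.mpr hn)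
  have hY : Disjoint Y X := Set.disjoint_iUnion₂_left.mpr hdisj
  have hrY (k : ℤ) (hk : k ≠ 0) : r ^ k • Y ⊆ X := by
    simp only [Y, Set.smul_set_iUnion]
    exact Set.iUnion₂_subset fun n hn => hmaps k n hk hn
  refine freeGroup_lift_injective_of_zpow_ping_pong ![t, r] ![Y, X] ?_ ?_ ?_
  · simpa [Fin.forall_fin_two, hX] using hX.smul_set.mono (htX 1 one_ne_zero)
  · simp [Pairwise, Fin.forall_fin_two, Function.onFun, hY, hY.symm]
  · simpa [Pairwise, Fin.forall_fin_two] using ⟨htX, hrY⟩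

section FreeGroupLift

variable {G : Type*} [Group G]

theorem not_isOfFinOrder_of_freeGroup_lift_injective {ι : Type*} {a : ι → G}
    (ha : Function.Injective (FreeGroup.lift a)) (i : ι) : ¬ IsOfFinOrder (a i) := by
  rw [← FreeGroup.lift_apply_of (f := a), ha.isOfFinOrder_iff]
  exact not_isOfFinOrder_of_isMulTorsionFree (FreeGroup.of_ne_one i)

theorem freeGroup_lift_pair_range (t r : G) :
    (FreeGroup.lift ![t, r]).range = Subgroup.closure {t, r} := by
  rw [FreeGroup.range_lift_eq_closure, Matrix.range_cons, Matrix.range_cons, Matrix.range_empty,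
    Set.union_empty, Set.singleton_union]

theorem coprod_lift_zpowers_range (t r : G) :
    (Monoid.Coprod.lift (Subgroup.zpowers t).subtype (Subgroup.zpowers r).subtype).range =
      Subgroup.closure {t, r} := by
  rw [Monoid.Coprod.range_lift, Subgroup.range_subtype, Subgroup.range_subtype,
    Subgroup.zpowers_eq_closure, Subgroup.zpowers_eq_closure, ← Subgroup.closure_union,
    Set.singleton_union]

theorem coprod_lift_zpowers_injective {t r : G}
    (h : Function.Injective (FreeGroup.lift ![t, r])) :
    Function.Injective
      (Monoid.Coprod.lift (Subgroup.zpowers t).subtype (Subgroup.zpowers r).subtype) := by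
  let t' : Subgroup.zpowers t := ⟨t, Subgroup.mem_zpowers t⟩
  let r' : Subgroup.zpowers r := ⟨r, Subgroup.mem_zpowers r⟩
  let φ : FreeGroup (Fin 2) →* Monoid.Coprod (Subgroup.zpowers t) (Subgroup.zpowers r) :=
    FreeGroup.lift ![Monoid.Coprod.inl t', Monoid.Coprod.inr r']
  have hφ : (Monoid.Coprod.lift (Subgroup.zpowers t).subtype (Subgroup.zpowers r).subtype).comp φ =
      FreeGroup.lift ![t, r] := by
    ext i
    fin_cases i <;> simp [φ, t', r']
  have hφt : φ (FreeGroup.of 0) = Monoid.Coprod.inl t' := by simp [φ]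
  have hφr : φ (FreeGroup.of 1) = Monoid.Coprod.inr r' := by simp [φ]
  have hsurj : Function.Surjective φ := by
    rw [← MonoidHom.range_eq_top, eq_top_iff, ← Monoid.Coprod.range_inl_sup_range_inr, sup_le_iff]
    constructor
    · rintro _ ⟨⟨_, n, rfl⟩, rfl⟩
      refine ⟨FreeGroup.of 0 ^ n, ?_⟩
      rw [map_zpow, hφt, ← map_zpow]
      rfl
    · rintro _ ⟨⟨_, n, rfl⟩, rfl⟩
      refine ⟨FreeGroup.of 1 ^ n, ?_⟩
      rw [map_zpow, hφr, ← map_zpow]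
      rfl
  refine Function.Injective.of_comp_right (g := φ) ?_ hsurj
  rwa [← MonoidHom.coe_comp, hφ]

theorem closure_pair_eq_closure_inv_mul (a b : G) :
    Subgroup.closure {a, b} = Subgroup.closure {a⁻¹ * b, a⁻¹ * b * a} := by
  refine le_antisymm ?_ ?_ <;>
    simp only [Subgroup.closure_le, Set.insert_subset_iff, Set.singleton_subset_iff,
      SetLike.mem_coe]
  · have hab : a⁻¹ * b ∈ Subgroup.closure {a⁻¹ * b, a⁻¹ * b * a} :=
      Subgroup.subset_closure (by simp)
    have ha : a ∈ Subgroup.closure {a⁻¹ * b, a⁻¹ * b * a} :=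
      (Subgroup.mul_mem_cancel_left _ hab).mp (Subgroup.subset_closure (by simp))
    exact ⟨ha, (Subgroup.mul_mem_cancel_left _ (inv_mem ha)).mp hab⟩
  · have ha : a ∈ Subgroup.closure {a, b} := Subgroup.subset_closure (by simp)
    have hb : b ∈ Subgroup.closure {a, b} := Subgroup.subset_closure (by simp)
    have hab := mul_mem (inv_mem ha) hb
    exact ⟨hab, mul_mem hab ha⟩

end FreeGroupLift

namespace HypergeometricCone

/-- The square-zero matrix `A⁻¹ * B - 1`, for `A` and `B` the two companion matrices. -/
def tSubOne : Matrix (Fin 6) (Fin 6) ℤ :=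
  !![0,0,0,0,0,-10; 0,0,0,0,0,8; 0,0,0,0,0,-28; 0,0,0,0,0,8; 0,0,0,0,0,-10; 0,0,0,0,0,0]

/-- The matrix `-(A⁻¹ * B * A)`, whose fourth power is unipotent. -/
def negR : Matrix (Fin 6) (Fin 6) ℤ :=
  !![0,0,0,0,10,61; -1,0,0,0,-8,-54; 0,-1,0,0,28,183; 0,0,-1,0,-8,-68; 0,0,0,-1,10,75;
    0,0,0,0,-1,-6]

/-- An involution conjugating both `t = A⁻¹ * B` and `r = A⁻¹ * B * A` to their inverses. -/
def reversor : Matrix (Fin 6) (Fin 6) ℤ :=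
  !![0,0,0,0,-1,-16; 0,0,0,-1,0,23; 0,0,-1,0,0,-48; 0,-1,0,0,0,23; -1,0,0,0,0,-16; 0,0,0,0,0,1]

/-- The columns span the extremal rays of the ping-pong cone, which was found by a numerical
search. -/
def coneGens : Matrix (Fin 6) (Fin 6) ℤ :=
  !![-11,-10,-11,-7,-12,-8; 13,9,11,1,8,10; -38,-32,-32,-20,-29,-17; 18,14,12,2,7,9;
    -15,-14,-13,-9,-7,-3; 1,1,1,1,1,1]

/-- The rows are the facet normals of the ping-pong cone. -/
def coneFacets : Matrix (Fin 6) (Fin 6) ℤ :=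
  !![18,3,-8,-3,6,23; -20,-10,8,10,-4,-26; -3,8,3,-6,-7,-20; 9,1,-3,-3,1,41; -5,-3,-1,1,3,-27;
    1,1,1,1,1,33]

theorem coneGens_mul_coneFacets : coneGens * coneFacets = (24 : ℤ) • (1 : Matrix _ _ ℤ) := by
  decide +kernel

theorem coneFacets_row_ne_zero : ∀ i, coneFacets.row i ≠ 0 := by
  decide +kernel

theorem tSubOne_mul_self : tSubOne * tSubOne = 0 := by
  decide +kernel

theorem negR_pow_four_sub_one_pow_four : (negR ^ 4 - 1) ^ 4 = 0 := by
  decide +kernel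

theorem reversor_mul_self : reversor * reversor = 1 := by
  decide +kernel

theorem one_add_tSubOne_mul_reversor_mul :
    (1 + tSubOne) * reversor * (1 + tSubOne) = reversor := by
  decide +kernel

theorem negR_mul_reversor_mul : negR * reversor * negR = reversor := by
  decide +kernel

/-- The matrices carrying the ping-pong cone and its image under `reversor` into that cone. -/
noncomputable def coneMaps : AddSubmonoid (Matrix (Fin 6) (Fin 6) ℤ) :=
  nonnegMaps coneFacets coneGens ⊓ nonnegMaps coneFacets (reversor * coneGens)

theorem nilpotent_pow_mul_negR_pow_mul_one_add_tSubOne_mem (i j : Fin 4) :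
    (negR ^ 4 - 1) ^ (j : ℕ) * (negR ^ ((i : ℕ) + 1) * (1 + tSubOne)) ∈ coneMaps := by
  constructor <;> intro a b <;> revert i j a b <;> decide +kernel

theorem nilpotent_pow_mul_negR_pow_mul_tSubOne_sub_one_mem (i j : Fin 4) :
    (negR ^ 4 - 1) ^ (j : ℕ) * (negR ^ ((i : ℕ) + 1) * (tSubOne - 1)) ∈ coneMaps := by
  constructor <;> intro a b <;> revert i j a b <;> decide +kernel

theorem negR_pow_succ_mul_mem_coneMaps {M : Matrix (Fin 6) (Fin 6) ℤ}
    (hM : ∀ i j : Fin 4, (negR ^ 4 - 1) ^ (j : ℕ) * (negR ^ ((i : ℕ) + 1) * M) ∈ coneMaps) (k : ℕ) :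
    negR ^ (k + 1) * M ∈ coneMaps := by
  have hk : negR ^ (k + 1) = (1 + (negR ^ 4 - 1)) ^ (k / 4) * negR ^ (k % 4 + 1) := by
    rw [add_sub_cancel, ← pow_mul, ← pow_add, ← add_assoc, Nat.div_add_mod]
  rw [hk, mul_assoc]
  refine one_add_pow_mul_mem (fun j => ?_) _
  obtain hj | hj := lt_or_ge j 4
  · exact hM ⟨k % 4, Nat.mod_lt k four_pos⟩ ⟨j, hj⟩
  · rw [pow_eq_zero_of_le hj negR_pow_four_sub_one_pow_four, zero_mul]
    exact zero_mem _

theorem mem_coneMaps_of_two_nsmul_mem {M : Matrix (Fin 6) (Fin 6) ℤ} (hM : 2 • M ∈ coneMaps) :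
    M ∈ coneMaps :=
  ⟨mem_nonnegMaps_of_nsmul_mem two_ne_zero hM.1, mem_nonnegMaps_of_nsmul_mem two_ne_zero hM.2⟩

theorem negR_pow_succ_mul_one_add_zsmul_mem_coneMaps (k : ℕ) {n : ℤ} (hn : n ≠ 0) :
    negR ^ (k + 1) * (1 + n • tSubOne) ∈ coneMaps ∨
      -(negR ^ (k + 1) * (1 + n • tSubOne)) ∈ coneMaps :=
  (two_nsmul_mul_one_add_zsmul_mem_or_neg_mem
    (negR_pow_succ_mul_mem_coneMaps nilpotent_pow_mul_negR_pow_mul_one_add_tSubOne_mem k)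
    (negR_pow_succ_mul_mem_coneMaps nilpotent_pow_mul_negR_pow_mul_tSubOne_sub_one_mem k) hn).imp
    mem_coneMaps_of_two_nsmul_mem mem_coneMaps_of_two_nsmul_mem

/-- The union of the open ping-pong cone and its image under `reversor`. -/
def doubleCone : Set (Fin 6 → ℤ) :=
  {x | x ∈ coneInterior coneFacets ∨ reversor *ᵥ x ∈ coneInterior coneFacets}

/-- The set returned to itself by every `r ^ k * t ^ n` with `k` and `n` nonzero. -/
def pingSet : Set (Fin 6 → ℤ) :=
  {x | x ∈ doubleCone ∨ -x ∈ doubleCone}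

theorem reversor_mulVec_reversor_mulVec (x : Fin 6 → ℤ) : reversor *ᵥ reversor *ᵥ x = x := by
  rw [mulVec_mulVec, reversor_mul_self, one_mulVec]

theorem reversor_mulVec_mem_doubleCone {x : Fin 6 → ℤ} (hx : x ∈ doubleCone) :
    reversor *ᵥ x ∈ doubleCone := by
  rw [doubleCone, Set.mem_ofPred_eq, reversor_mulVec_reversor_mulVec]
  exact hx.symm

theorem reversor_mulVec_mem_pingSet {x : Fin 6 → ℤ} (hx : x ∈ pingSet) :
    reversor *ᵥ x ∈ pingSet := by
  rw [pingSet, Set.mem_ofPred_eq, ← mulVec_neg]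
  exact hx.imp reversor_mulVec_mem_doubleCone reversor_mulVec_mem_doubleCone

theorem neg_mem_pingSet {x : Fin 6 → ℤ} (hx : x ∈ pingSet) : -x ∈ pingSet := by
  rw [pingSet, Set.mem_ofPred_eq, neg_neg]
  exact hx.symm

theorem mulVec_mem_doubleCone {M : Matrix (Fin 6) (Fin 6) ℤ} (hM : M ∈ coneMaps)
    (hunit : IsUnit M) {x : Fin 6 → ℤ} (hx : x ∈ doubleCone) : M *ᵥ x ∈ doubleCone := by
  refine Or.inl ?_
  obtain hx | hx := hx
  · exact mulVec_mem_coneInterior (by norm_num) coneGens_mul_coneFacets coneFacets_row_ne_zero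
      hM.1 hunit hx
  · have hMx : M *ᵥ x = (M * reversor) *ᵥ reversor *ᵥ x := by
      rw [← mulVec_mulVec, reversor_mulVec_reversor_mulVec]
    have hMrev : M * reversor ∈ nonnegMaps coneFacets coneGens := fun i j => by
      rw [← Matrix.mul_assoc, Matrix.mul_assoc _ reversor]
      exact hM.2 i j
    rw [hMx]
    exact mulVec_mem_coneInterior (by norm_num) coneGens_mul_coneFacets coneFacets_row_ne_zero
      hMrev (hunit.mul (IsUnit.of_mul_eq_one _ reversor_mul_self)) hx

theorem mulVec_mem_pingSet {M : Matrix (Fin 6) (Fin 6) ℤ} (hM : M ∈ coneMaps ∨ -M ∈ coneMaps)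
    (hunit : IsUnit M) {x : Fin 6 → ℤ} (hx : x ∈ pingSet) : M *ᵥ x ∈ pingSet := by
  have hmaps {N : Matrix (Fin 6) (Fin 6) ℤ} (hN : N ∈ coneMaps) (hunit : IsUnit N) :
      N *ᵥ x ∈ pingSet := by
    rw [pingSet, Set.mem_ofPred_eq, ← mulVec_neg]
    exact hx.imp (mulVec_mem_doubleCone hN hunit) (mulVec_mem_doubleCone hN hunit)
  obtain hM | hM := hM
  · exact hmaps hM hunit
  · simpa [neg_mulVec] using neg_mem_pingSet (hmaps hM hunit.neg)

theorem pingSet_nonempty : pingSet.Nonempty :=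
  ⟨![-59, 52, -168, 62, -61, 6], Or.inl <| Or.inl <| by
    rw [coneInterior, Set.mem_ofPred_eq]
    decide +kernel⟩

/-- Together with `rightForm`, spans a plane of linear forms that is stable under `t` and
`reversor`. -/
def leftForm : Fin 6 → ℤ := ![1, 0, 0, 0, 1, 26]

/-- The image of `leftForm` under `reversor`. -/
def rightForm : Fin 6 → ℤ := ![-1, 0, 0, 0, -1, -6]

theorem leftForm_vecMul_reversor : leftForm ᵥ* reversor = rightForm := by
  decide +kernel

theorem rightForm_vecMul_reversor : rightForm ᵥ* reversor = leftForm := by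
  decide +kernel

theorem leftForm_vecMul_tSubOne : leftForm ᵥ* tSubOne = -(leftForm + rightForm) := by
  decide +kernel

theorem rightForm_vecMul_tSubOne : rightForm ᵥ* tSubOne = leftForm + rightForm := by
  decide +kernel

theorem leftForm_vecMul_coneGens : leftForm ᵥ* coneGens = ![0, 2, 2, 10, 7, 15] := by
  decide +kernel

theorem rightForm_vecMul_coneGens : rightForm ᵥ* coneGens = ![20, 18, 18, 10, 13, 5] := by
  decide +kernel

theorem forms_pos_of_mem_coneInterior {x : Fin 6 → ℤ} (hx : x ∈ coneInterior coneFacets) :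
    0 < leftForm ⬝ᵥ x ∧ 0 < rightForm ⬝ᵥ x :=
  ⟨dotProduct_pos_of_mem_coneInterior (by norm_num) coneGens_mul_coneFacets
      (by decide +kernel) (leftForm_vecMul_coneGens ▸ by simp [Pi.le_def, Fin.forall_fin_succ]) hx,
    dotProduct_pos_of_mem_coneInterior (by norm_num) coneGens_mul_coneFacets
      (by decide +kernel) (rightForm_vecMul_coneGens ▸ by simp [Pi.le_def, Fin.forall_fin_succ]) hx⟩

theorem forms_pos_of_mem_doubleCone {x : Fin 6 → ℤ} (hx : x ∈ doubleCone) :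
    0 < leftForm ⬝ᵥ x ∧ 0 < rightForm ⬝ᵥ x := by
  obtain hx | hx := hx
  · exact forms_pos_of_mem_coneInterior hx
  · have hforms := forms_pos_of_mem_coneInterior hx
    rw [dotProduct_mulVec, dotProduct_mulVec, leftForm_vecMul_reversor,
      rightForm_vecMul_reversor] at hforms
    exact hforms.symm

theorem forms_mul_pos_of_mem_pingSet {x : Fin 6 → ℤ} (hx : x ∈ pingSet) :
    0 < (leftForm ⬝ᵥ x) * (rightForm ⬝ᵥ x) := by
  obtain hx | hx := hx <;> obtain ⟨hl, hr⟩ := forms_pos_of_mem_doubleCone hx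
  · exact mul_pos hl hr
  · simpa using mul_pos hl hr

theorem sub_mul_add_mul_add_mul_add_neg {a b n : ℤ} (hab : 0 < a * b) (hn : n ≠ 0) :
    (a - n * (a + b)) * (b + n * (a + b)) < 0 := by
  have hpos (a b : ℤ) (hab : 0 < a * b) (p : ℕ) :
      (a - (p + 1) * (a + b)) * (b + (p + 1) * (a + b)) < 0 := by
    have hlin : 0 ≤ p * (a ^ 2 + 4 * (a * b) + 3 * b ^ 2) := by positivity
    linear_combination hab + hlin + 2 * sq_nonneg b + sq_nonneg (p * (a + b))
  obtain ⟨m, rfl | rfl⟩ := n.eq_nat_or_neg <;>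
    obtain ⟨p, rfl⟩ := Nat.exists_eq_succ_of_ne_zero (by simpa using hn)
  · exact_mod_cast hpos a b hab p
  · have hswap := hpos b a (by rwa [mul_comm]) p
    push_cast
    linear_combination hswap

theorem one_add_zsmul_tSubOne_mulVec_notMem_pingSet {n : ℤ} (hn : n ≠ 0) {x : Fin 6 → ℤ}
    (hx : x ∈ pingSet) : (1 + n • tSubOne) *ᵥ x ∉ pingSet := fun hx' => by
  have hlt := sub_mul_add_mul_add_mul_add_neg (forms_mul_pos_of_mem_pingSet hx) hn
  have hpos := forms_mul_pos_of_mem_pingSet hx'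
  rw [add_mulVec, one_mulVec, smul_mulVec, dotProduct_add, dotProduct_add, dotProduct_smul,
    dotProduct_smul, dotProduct_mulVec, dotProduct_mulVec, leftForm_vecMul_tSubOne,
    rightForm_vecMul_tSubOne, neg_dotProduct, add_dotProduct, smul_neg, ← sub_eq_add_neg] at hpos
  exact hlt.not_gt hpos

section PingPong

variable {t r : GL (Fin 6) ℤ}

theorem disjoint_zpow_smul_pingSet (ht : t.val = 1 + tSubOne) {n : ℤ} (hn : n ≠ 0) :
    Disjoint (t ^ n • pingSet) pingSet := by
  rw [Set.disjoint_left]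
  rintro _ ⟨x, hx, rfl⟩
  change (t ^ n).val *ᵥ x ∉ pingSet
  rw [coe_zpow_eq_one_add_zsmul tSubOne_mul_self ht]
  exact one_add_zsmul_tSubOne_mulVec_notMem_pingSet hn hx

theorem pow_succ_smul_zpow_smul_mem_pingSet (ht : t.val = 1 + tSubOne) (hr : r.val = -negR)
    (k : ℕ) {n : ℤ} (hn : n ≠ 0) {x : Fin 6 → ℤ} (hx : x ∈ pingSet) :
    r ^ (k + 1) • t ^ n • x ∈ pingSet := by
  have hmem : (r ^ (k + 1) * t ^ n).val ∈ coneMaps ∨ -(r ^ (k + 1) * t ^ n).val ∈ coneMaps := by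
    have hcone := negR_pow_succ_mul_one_add_zsmul_mem_coneMaps k hn
    rw [Units.val_mul, Units.val_pow_eq_pow_val, hr, coe_zpow_eq_one_add_zsmul tSubOne_mul_self ht]
    obtain hk | hk := (k + 1).even_or_odd
    · rwa [hk.neg_pow]
    · rwa [hk.neg_pow, neg_mul, neg_neg, or_comm]
  rw [← mul_smul]
  exact mulVec_mem_pingSet hmem (Units.isUnit _) hx

/-- `reversor` as an element of `GL (Fin 6) ℤ`, where the conjugation is carried out. -/
def reversorUnit : GL (Fin 6) ℤ :=
  ⟨reversor, reversor, reversor_mul_self, reversor_mul_self⟩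

theorem semiconjBy_reversorUnit_of_mul_mul {u : GL (Fin 6) ℤ}
    (hu : u.val * reversor * u.val = reversor) : SemiconjBy reversorUnit u u⁻¹ := by
  rw [SemiconjBy, eq_inv_mul_iff_mul_eq, ← mul_assoc]
  exact Units.ext hu

theorem semiconjBy_reversorUnit_zpow_mul_zpow (ht : t.val = 1 + tSubOne) (hr : r.val = -negR)
    (k n : ℤ) : SemiconjBy reversorUnit (r ^ k * t ^ (-n)) (r ^ (-k) * t ^ n) := by
  have ht' : SemiconjBy reversorUnit t t⁻¹ := semiconjBy_reversorUnit_of_mul_mul <| by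
    rw [ht, one_add_tSubOne_mul_reversor_mul]
  have hr' : SemiconjBy reversorUnit r r⁻¹ := semiconjBy_reversorUnit_of_mul_mul <| by
    rw [hr, neg_mul, neg_mul_neg, negR_mul_reversor_mul]
  simpa only [_root_.inv_zpow', neg_neg] using (hr'.zpow_right k).mul_right (ht'.zpow_right (-n))

theorem zpow_smul_zpow_smul_pingSet_subset (ht : t.val = 1 + tSubOne) (hr : r.val = -negR)
    {k n : ℤ} (hk : k ≠ 0) (hn : n ≠ 0) : r ^ k • t ^ n • pingSet ⊆ pingSet := by
  rintro _ ⟨_, ⟨x, hx, rfl⟩, rfl⟩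
  obtain ⟨k, rfl | rfl⟩ := k.eq_nat_or_neg <;>
    obtain ⟨k, rfl⟩ := Nat.exists_eq_succ_of_ne_zero (by simpa using hk)
  · exact pow_succ_smul_zpow_smul_mem_pingSet ht hr k hn hx
  · have hconj := semiconjBy_reversorUnit_zpow_mul_zpow ht hr (k + 1 : ℕ) n
    obtain ⟨y, hy, rfl⟩ : ∃ y ∈ pingSet, reversorUnit • y = x :=
      ⟨reversor *ᵥ x, reversor_mulVec_mem_pingSet hx, reversor_mulVec_reversor_mulVec x⟩
    have hback := reversor_mulVec_mem_pingSet
      (pow_succ_smul_zpow_smul_mem_pingSet ht hr k (neg_ne_zero.mpr hn) hy)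
    change reversorUnit • r ^ (k + 1) • t ^ (-n) • y ∈ pingSet at hback
    rwa [← zpow_natCast, ← mul_smul (r ^ _), ← mul_smul, hconj.eq, mul_smul, mul_smul] at hback

theorem freeGroup_lift_pair_injective (ht : t.val = 1 + tSubOne) (hr : r.val = -negR) :
    Function.Injective (FreeGroup.lift ![t, r]) :=
  freeGroup_lift_pair_injective_of_zpow_smul_subset pingSet_nonempty
    (fun _ hn => disjoint_zpow_smul_pingSet ht hn)
    fun _ _ hk hn => zpow_smul_zpow_smul_pingSet_subset ht hr hk hn

end PingPong

theorem inv_mul_val_eq {A B : GL (Fin 6) ℤ} (hA : A.val = companionF) (hB : B.val = companionG) :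
    (A⁻¹ * B).val = 1 + tSubOne := by
  have hmul : companionF * (1 + tSubOne) = companionG := by decide +kernel
  rw [Units.val_mul, hB, ← hmul, ← hA, Units.inv_mul_cancel_left]

theorem inv_mul_mul_val_eq {A B : GL (Fin 6) ℤ} (hA : A.val = companionF)
    (hB : B.val = companionG) : (A⁻¹ * B * A).val = -negR := by
  have hmul : (1 + tSubOne) * companionF = -negR := by decide +kernel
  rw [Units.val_mul, inv_mul_val_eq hA hB, hA, hmul]

end HypergeometricCone

/-- The hypergeometric group with `α = (0,0,0,0,0,0)`, `β = (1/2,1/2,1/2,1/2,1/4,3/4)` is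
free of rank two: `t = A⁻¹B` and `r = A⁻¹BA` have infinite order, generate the group
generated by `A` and `B`, and the group is the internal free product of `⟨t⟩` and `⟨r⟩`;
in particular it is isomorphic to `ℤ * ℤ`, the free group of rank `2`. -/
theorem hypergeometric_free_of_rank_two
    (A B : GL (Fin 6) ℤ)
    (hA : (A : Matrix (Fin 6) (Fin 6) ℤ) = companionF)
    (hB : (B : Matrix (Fin 6) (Fin 6) ℤ) = companionG) :
    ¬ IsOfFinOrder (A⁻¹ * B) ∧ ¬ IsOfFinOrder (A⁻¹ * B * A) ∧
    Subgroup.closure {A, B} = Subgroup.closure {A⁻¹ * B, A⁻¹ * B * A} ∧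
    Function.Injective
      (Monoid.Coprod.lift (Subgroup.zpowers (A⁻¹ * B)).subtype
        (Subgroup.zpowers (A⁻¹ * B * A)).subtype) ∧
    (Monoid.Coprod.lift (Subgroup.zpowers (A⁻¹ * B)).subtype
        (Subgroup.zpowers (A⁻¹ * B * A)).subtype).range = Subgroup.closure {A, B} ∧
    Nonempty ((Subgroup.closure {A, B} : Subgroup (GL (Fin 6) ℤ)) ≃* FreeGroup (Fin 2)) := by
  have hfree : Function.Injective (FreeGroup.lift ![A⁻¹ * B, A⁻¹ * B * A]) :=
    HypergeometricCone.freeGroup_lift_pair_injective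
      (HypergeometricCone.inv_mul_val_eq hA hB) (HypergeometricCone.inv_mul_mul_val_eq hA hB)
  have hclosure := closure_pair_eq_closure_inv_mul A B
  refine ⟨not_isOfFinOrder_of_freeGroup_lift_injective hfree 0,
    not_isOfFinOrder_of_freeGroup_lift_injective hfree 1, hclosure,
    coprod_lift_zpowers_injective hfree,
    (coprod_lift_zpowers_range _ _).trans hclosure.symm, ?_⟩
  rw [hclosure, ← freeGroup_lift_pair_range]
  exact ⟨(MonoidHom.ofInjective hfree).symm⟩
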